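/- Let n ≥ 4 and for X ∈ sl_n(ℂ) put μ(X) = X_{n,1}·X_{n−1,2} − X_{n−1,1}·X_{n,2}, where X_{i,j} denotes the (i,j) entry. Then the set V = {X ∈ sl_n(ℂ) : μ(g·X·g⁻¹) = 0 for all g ∈ GL_n(ℂ)} equals the Zariski closure of the cone {t·g·D·g⁻¹ : t ∈ ℂ∖{0}, g ∈ GL_n(ℂ)}, where D = diag(n−1, −1, −1, …, −1); equivalently, V = {t·g·D·g⁻¹ : t ∈ ℂ∖{0}, g ∈ GL_n(ℂ)} ∪ {X ∈ sl_n(ℂ) : rank X ≤ 1}. -/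

import Mathlib

open Matrix

noncomputable section

abbrev Mat (n : ℕ) := Matrix (Fin n) (Fin n) ℂ

abbrev GLn (n : ℕ) := Matrix.GeneralLinearGroup (Fin n) ℂ

/-- A subset of the space of `n×n` complex matrices is Zariski closed if it is the
common zero locus of a family of polynomials in the matrix entries. -/
def zclosed {n : ℕ} (S : Set (Mat n)) : Prop :=
  ∃ T : Set (MvPolynomial (Fin n × Fin n) ℂ),
    S = {X | ∀ p ∈ T, MvPolynomial.eval (fun q => X q.1 q.2) p = 0}

/-- The Zariski closure of a set of matrices. -/
def zclosure {n : ℕ} (S : Set (Mat n)) : Set (Mat n) :=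
  ⋂₀ {C | zclosed C ∧ S ⊆ C}

/-!
Up to conjugation, `μ` is the 2×2 minor saying how `X v` and `X w` meet a complement of the span of
`v` and `w`, so `μ` vanishes on the orbit of `X` iff `v, w, X v, X w` are always linearly dependent.
In dimension at least four this forces `X = l • 1 + (rank at most one)`. Indeed, if `v` and `X v`
are independent and span `U`, then `w` and `X w` are dependent modulo `U` for every `w`, so `X` acts
on the quotient by `U` as a scalar `l`; if `X - l` had rank at least two, some `v, w` independent
modulo `U` would have independent images under `X - l`; these images lie in `U`, so that
`v, w, X v, X w` would be independent.

The traceless matrices `l • 1 + vecMulVec u w` are those with `w ⬝ᵥ u = -n l`. For `l ≠ 0` this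
pairing is the only invariant of `(u, w)` under conjugation, so together they form the cone over
`D`. A traceless `vecMulVec u w` is the limit as `s → 0` of `s • 1 + vecMulVec (u - s • c) w` with
`w ⬝ᵥ c = n`, hence lies in the Zariski closure of the cone.
-/

section Ring

variable {K V : Type*} [Ring K] [AddCommGroup V] [Module K V]

theorem exists_notMem_and_notMem {A B : Submodule K V} (hA : A ≠ ⊤) (hB : B ≠ ⊤) :
    ∃ v, v ∉ A ∧ v ∉ B := by
  by_contra! h
  have hcover : ((⊤ : Submodule K V) : Set V) ⊆ A ∪ B := fun v _ ↦ or_iff_not_imp_left.2 (h v)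
  rcases AddSubgroupClass.subset_union.1 hcover with h | h
  exacts [hA (top_le_iff.1 h), hB (top_le_iff.1 h)]

theorem linearIndependent_four_iff {a b c d : V} :
    LinearIndependent K ![a, b, c, d] ↔ ∀ r s t u : K, r • a + s • b + t • c + u • d = 0 →
      r = 0 ∧ s = 0 ∧ t = 0 ∧ u = 0 := by
  simp [Fintype.linearIndependent_iff, Fin.forall_fin_succ_pi, Fin.forall_fin_succ,
    Fin.sum_univ_succ, ← add_assoc, Fin.forall_fin_zero_pi]

theorem linearIndependent_four_of_mkQ {U : Submodule K V} {a b c d : V} (hc : c ∈ U) (hd : d ∈ U)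
    (hab : LinearIndependent K ![U.mkQ a, U.mkQ b]) (hcd : LinearIndependent K ![c, d]) :
    LinearIndependent K ![a, b, c, d] := by
  refine linearIndependent_four_iff.2 fun r s t u h ↦ ?_
  have hmod : r • U.mkQ a + s • U.mkQ b = 0 := by
    simpa [(Submodule.Quotient.mk_eq_zero U).2 hc, (Submodule.Quotient.mk_eq_zero U).2 hd]
      using congrArg U.mkQ h
  obtain ⟨rfl, rfl⟩ := LinearIndependent.pair_iff.1 hab r s hmod
  exact ⟨rfl, rfl, LinearIndependent.pair_iff.1 hcd t u (by simpa using h)⟩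

end Ring

section DivisionRing

variable {K V P Q : Type*} [DivisionRing K] [AddCommGroup V] [Module K V] [AddCommGroup P]
  [Module K P] [AddCommGroup Q] [Module K Q]

theorem exists_notMem_span_singleton_of_one_lt_rank {p : V →ₗ[K] P} (hp : 1 < p.rank) (x : P) :
    ∃ v, p v ∉ K ∙ x := by
  by_contra! h
  have hle : LinearMap.range p ≤ K ∙ x := by rintro _ ⟨v, rfl⟩; exact h v
  exact hp.not_ge <| (Submodule.rank_mono hle).trans <| (rank_span_le _).trans (by simp)

theorem linearIndependent_pair_of_notMem_span_singleton {x y : V} (hx : x ≠ 0) (hy : y ∉ K ∙ x) :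
    LinearIndependent K ![x, y] :=
  (LinearIndependent.pair_iff' hx).2 fun a ha ↦ hy (Submodule.mem_span_singleton.2 ⟨a, ha⟩)

theorem exists_linearIndependent_pair_and_pair {p : V →ₗ[K] P} {q : V →ₗ[K] Q}
    (hp : 1 < p.rank) (hq : 1 < q.rank) :
    ∃ v w, LinearIndependent K ![p v, p w] ∧ LinearIndependent K ![q v, q w] := by
  have exists_notMem (x : P) (y : Q) : ∃ v, p v ∉ K ∙ x ∧ q v ∉ K ∙ y := by
    obtain ⟨a, ha⟩ := exists_notMem_span_singleton_of_one_lt_rank hp x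
    obtain ⟨b, hb⟩ := exists_notMem_span_singleton_of_one_lt_rank hq y
    exact exists_notMem_and_notMem (A := (K ∙ x).comap p) (B := (K ∙ y).comap q)
      (fun h ↦ ha (h.ge (Submodule.mem_top (x := a))))
      (fun h ↦ hb (h.ge (Submodule.mem_top (x := b))))
  obtain ⟨v, hpv, hqv⟩ := exists_notMem 0 0
  obtain ⟨w, hpw, hqw⟩ := exists_notMem (p v) (q v)
  rw [Submodule.span_zero_singleton, Submodule.mem_bot] at hpv hqv
  exact ⟨v, w, linearIndependent_pair_of_notMem_span_singleton hpv hpw,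
    linearIndependent_pair_of_notMem_span_singleton hqv hqw⟩

theorem one_lt_rank_mkQ_span_pair (hV : 4 ≤ Module.rank K V) (x y : V) :
    1 < (Submodule.span K {x, y}).mkQ.rank := by
  have hspan : Module.rank K (Submodule.span K {x, y}) ≤ 2 :=
    (rank_span_le _).trans <| (Cardinal.mk_insert_le).trans (by simp [one_add_one_eq_two])
  rw [LinearMap.rank, rank_range_of_surjective _ (Submodule.mkQ_surjective _)]
  by_contra! hquot
  have := calc
    (4 : Cardinal) ≤ Module.rank K V := hV
    _ = Module.rank K (V ⧸ Submodule.span K {x, y}) + Module.rank K (Submodule.span K {x, y}) :=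
      (Submodule.rank_quotient_add_rank _).symm
    _ ≤ 1 + 2 := add_le_add hquot hspan
  norm_num at this

theorem exists_linearEquiv_apply_eq_of_linearIndependent {κ : Type*} [Finite κ] {v w : κ → V}
    (hv : LinearIndependent K v) (hw : LinearIndependent K w) :
    ∃ e : V ≃ₗ[K] V, ∀ i, e (v i) = w i := by
  have := FiniteDimensional.span_of_finite K (Set.finite_range v)
  obtain ⟨e, he⟩ := Submodule.exists_linearEquiv_restrict_eq
    (hv.linearCombinationEquiv.symm ≪≫ₗ hw.linearCombinationEquiv)
  refine ⟨e, fun i ↦ ?_⟩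
  have hvi : (hv.linearCombinationEquiv (Finsupp.single i 1) : V) = v i := by simp
  rw [← hvi, ← he]
  simp

end DivisionRing

section Field

variable {K V Q : Type*} [Field K] [AddCommGroup V] [Module K V] [AddCommGroup Q] [Module K Q]

theorem exists_eq_smul_of_forall_not_linearIndependent {p q : V →ₗ[K] Q}
    (hp : Function.Surjective p) (hrank : 1 < p.rank)
    (h : ∀ v, ¬ LinearIndependent K ![p v, q v]) : ∃ l : K, q = l • p := by
  have exists_smul (v : V) (hv : p v ≠ 0) : ∃ a : K, a • p v = q v := by
    simpa [LinearIndependent.pair_iff' hv] using h v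
  have ker_le : LinearMap.ker p ≤ LinearMap.ker q := by
    intro k hk
    rw [LinearMap.mem_ker] at hk ⊢
    obtain ⟨v, hv⟩ := exists_notMem_span_singleton_of_one_lt_rank hrank (q k)
    have hpv : p v ≠ 0 := fun h0 ↦ hv (h0 ▸ Submodule.zero_mem _)
    obtain ⟨a, ha⟩ := exists_smul v hpv
    obtain ⟨b, hb⟩ := exists_smul (v + k) (by simpa [hk] using hpv)
    have hqk : q k = (b - a) • p v := by
      rw [map_add, map_add, hk, add_zero, ← ha] at hb
      rw [sub_smul, hb, add_sub_cancel_left]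
    by_contra hqk0
    have hba : b - a ≠ 0 := fun h0 ↦ hqk0 (by rw [hqk, h0, zero_smul])
    exact hv (Submodule.mem_span_singleton.2 ⟨(b - a)⁻¹, by rw [hqk, inv_smul_smul₀ hba]⟩)
  obtain ⟨s, hs⟩ := p.exists_rightInverse_of_surjective (LinearMap.range_eq_top.2 hp)
  have hps (x : Q) : p (s x) = x := LinearMap.congr_fun hs x
  obtain ⟨l, hl⟩ := LinearMap.exists_eq_smul_id_of_forall_notLinearIndependent (f := q ∘ₗ s)
    fun x ↦ by simpa [hps] using h (s x)
  refine ⟨l, LinearMap.ext fun v ↦ ?_⟩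
  have hv : v - s (p v) ∈ LinearMap.ker q := ker_le (by simp [hps])
  rw [LinearMap.mem_ker, map_sub, sub_eq_zero] at hv
  simpa [hv] using LinearMap.congr_fun hl (p v)

theorem exists_range_sub_smul_le_span_pair {f : Module.End K V} (hV : 4 ≤ Module.rank K V)
    (h : ∀ v w, ¬ LinearIndependent K ![v, w, f v, f w]) {v : V}
    (hv : LinearIndependent K ![v, f v]) :
    ∃ l : K, LinearMap.range (f - l • 1) ≤ Submodule.span K {v, f v} := by
  set U := Submodule.span K {v, f v}
  have dependent_mod (w : V) : ¬ LinearIndependent K ![U.mkQ w, (U.mkQ ∘ₗ f) w] := by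
    intro hw
    have hli : LinearIndependent K ![w, f w, v, f v] := linearIndependent_four_of_mkQ
      (Submodule.subset_span (by simp)) (Submodule.subset_span (by simp)) hw hv
    refine h w v ?_
    convert hli.comp ![0, 2, 1, 3] (by decide) using 1
    ext i; fin_cases i <;> rfl
  obtain ⟨l, hl⟩ := exists_eq_smul_of_forall_not_linearIndependent U.mkQ_surjective
    (one_lt_rank_mkQ_span_pair hV v (f v)) dependent_mod
  refine ⟨l, ?_⟩
  rintro _ ⟨w, rfl⟩
  rw [← Submodule.Quotient.mk_eq_zero]
  simpa [sub_eq_zero] using LinearMap.congr_fun hl w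

theorem exists_rank_sub_smul_le_one {f : Module.End K V} (hV : 4 ≤ Module.rank K V)
    (h : ∀ v w, ¬ LinearIndependent K ![v, w, f v, f w]) :
    ∃ l : K, LinearMap.rank (f - l • 1) ≤ 1 := by
  by_cases hf : ∀ v, ¬ LinearIndependent K ![v, f v]
  · obtain ⟨l, rfl⟩ := LinearMap.exists_eq_smul_id_of_forall_notLinearIndependent hf
    exact ⟨l, by simp⟩
  push Not at hf
  obtain ⟨v, hv⟩ := hf
  obtain ⟨l, hl⟩ := exists_range_sub_smul_le_span_pair hV h hv
  refine ⟨l, not_lt.1 fun hrank ↦ ?_⟩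
  obtain ⟨a, b, hab, hab'⟩ := exists_linearIndependent_pair_and_pair hrank
    (one_lt_rank_mkQ_span_pair hV v (f v))
  have hli := linearIndependent_four_of_mkQ (hl ⟨a, rfl⟩) (hl ⟨b, rfl⟩) hab' hab
  refine h a b (linearIndependent_four_iff.2 fun r s t u hz ↦ ?_)
  obtain ⟨hr, hs, rfl, rfl⟩ := linearIndependent_four_iff.1 hli (r + l * t) (s + l * u) t u (by
    rw [← hz]
    simp only [LinearMap.sub_apply, LinearMap.smul_apply, Module.End.one_apply]
    module)
  simpa using And.intro hr hs

end Field

section MatrixConjugation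

variable {K ι : Type*} [Field K] [Fintype ι] [DecidableEq ι]

theorem exists_mulVec_eq_of_linearIndependent {κ : Type*} [Finite κ] {v w : κ → ι → K}
    (hv : LinearIndependent K v) (hw : LinearIndependent K w) :
    ∃ g : GL ι K, ∀ i, (g : Matrix ι ι K) *ᵥ v i = w i := by
  obtain ⟨e, he⟩ := exists_linearEquiv_apply_eq_of_linearIndependent hv hw
  refine ⟨GeneralLinearGroup.toLin.symm (LinearMap.GeneralLinearGroup.ofLinearEquiv e),
    fun i ↦ ?_⟩
  rw [← he]
  exact LinearMap.toMatrix'_mulVec _ _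

theorem conj_smul_one_add_vecMulVec {R : Type*} [CommRing R] (g : GL ι R) (l : R) (u w : ι → R) :
    (g : Matrix ι ι R) * (l • 1 + vecMulVec u w) * (↑g⁻¹ : Matrix ι ι R) =
      l • 1 + vecMulVec ((g : Matrix ι ι R) *ᵥ u) (w ᵥ* (↑g⁻¹ : Matrix ι ι R)) := by
  rw [mul_add, add_mul, mul_vecMulVec, vecMulVec_mul, mul_smul_comm, smul_mul_assoc, mul_one,
    Units.mul_inv]

theorem exists_mulVec_eq_self_and_vecMul_eq {u w w' : ι → K} (h : w ⬝ᵥ u = w' ⬝ᵥ u)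
    (hne : w ⬝ᵥ u ≠ 0) :
    ∃ g : GL ι K, (g : Matrix ι ι K) *ᵥ u = u ∧ w ᵥ* (g : Matrix ι ι K) = w' := by
  set z : ι → K := (w ⬝ᵥ u)⁻¹ • (w' - w)
  have hz : z ⬝ᵥ u = 0 := by simp [z, h]
  have hsq : vecMulVec u z * vecMulVec u z = 0 := by
    rw [vecMulVec_mul_vecMulVec, hz, zero_smul, vecMulVec_zero]
  let g : GL ι K := ⟨1 + vecMulVec u z, 1 - vecMulVec u z,
    by rw [add_mul, mul_sub, mul_sub, hsq]; simp, by rw [sub_mul, mul_add, mul_add, hsq]; simp⟩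
  refine ⟨g, ?_, ?_⟩
  · change (1 + vecMulVec u z) *ᵥ u = u
    simp [add_mulVec, vecMulVec_mulVec, hz]
  · change w ᵥ* (1 + vecMulVec u z) = w'
    rw [vecMul_add, vecMul_one, vecMul_vecMulVec, smul_inv_smul₀ hne, add_sub_cancel]

theorem exists_mulVec_eq_and_vecMul_inv_eq {u u' w w' : ι → K} (h : w ⬝ᵥ u = w' ⬝ᵥ u')
    (hne : w ⬝ᵥ u ≠ 0) :
    ∃ g : GL ι K, (g : Matrix ι ι K) *ᵥ u = u' ∧ w ᵥ* (↑g⁻¹ : Matrix ι ι K) = w' := by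
  have hu : u ≠ 0 := by rintro rfl; simp at hne
  have hu' : u' ≠ 0 := by rintro rfl; simp [h] at hne
  obtain ⟨a, ha⟩ := exists_mulVec_eq_of_linearIndependent (v := ![u]) (w := ![u'])
    (by simpa [linearIndependent_unique_iff]) (by simpa [linearIndependent_unique_iff])
  have hau : (a : Matrix ι ι K) *ᵥ u = u' := ha 0
  have hdot : w' ⬝ᵥ u' = (w ᵥ* (↑a⁻¹ : Matrix ι ι K)) ⬝ᵥ u' := by
    rw [← h, ← hau, ← dotProduct_mulVec, mulVec_mulVec, Units.inv_mul, one_mulVec]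
  obtain ⟨b, hbu, hbw⟩ := exists_mulVec_eq_self_and_vecMul_eq hdot (h ▸ hne)
  refine ⟨b * a, ?_, ?_⟩
  · rw [Units.val_mul, ← mulVec_mulVec, hau, hbu]
  · rw [_root_.mul_inv_rev, Units.val_mul, ← vecMul_vecMul, ← hbw, vecMul_vecMul, Units.mul_inv,
      vecMul_one]

end MatrixConjugation

section RankOneSlice

variable {K ι : Type*} [Field K] [Fintype ι]

theorem rank_le_one_iff_exists_eq_vecMulVec {κ : Type*} {X : Matrix κ ι K} :
    X.rank ≤ 1 ↔ ∃ u w, X = vecMulVec u w := by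
  classical
  refine ⟨fun h ↦ ?_, ?_⟩
  · rw [Matrix.rank, finrank_le_one_iff] at h
    obtain ⟨⟨u, _⟩, hu⟩ := h
    choose w hw using fun j ↦ hu ⟨X.mulVecLin (Pi.single j 1), _, rfl⟩
    refine ⟨u, w, ext fun i j ↦ ?_⟩
    have hij := congrFun (congrArg Subtype.val (hw j)) i
    simp only [mulVecLin_apply, mulVec_single_one, col_apply] at hij
    rw [← hij]
    exact mul_comm _ _
  · rintro ⟨u, w, rfl⟩
    exact rank_vecMulVec_le u w

variable [DecidableEq ι]

/-- The traceless matrices differing from the scalar matrix `l • 1` by rank at most one. Over `ℂ`,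
these slices for `l ≠ 0` fill the rank-one Dixmier sheet, `l` being the repeated eigenvalue, and the
slice at `l = 0` is the closure of the minimal nilpotent orbit. -/
def rankOneSlice (l : K) : Set (Matrix ι ι K) :=
  {X | X.trace = 0 ∧ (X - l • 1).rank ≤ 1}

theorem mem_rankOneSlice_iff {l : K} {X : Matrix ι ι K} :
    X ∈ rankOneSlice l ↔
      ∃ u w, w ⬝ᵥ u = -(Fintype.card ι * l) ∧ X = l • 1 + vecMulVec u w := by
  have htrace (u w : ι → K) :
      (l • 1 + vecMulVec u w).trace = 0 ↔ w ⬝ᵥ u = -(Fintype.card ι * l) := by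
    rw [trace_add, trace_smul, trace_one, trace_vecMulVec, dotProduct_comm w u, smul_eq_mul,
      mul_comm, add_comm, ← eq_neg_iff_add_eq_zero]
  simp only [rankOneSlice, Set.mem_ofPred_eq, rank_le_one_iff_exists_eq_vecMulVec,
    sub_eq_iff_eq_add']
  constructor
  · rintro ⟨h, u, w, rfl⟩
    exact ⟨u, w, (htrace u w).1 h, rfl⟩
  · rintro ⟨u, w, h, rfl⟩
    exact ⟨(htrace u w).2 h, u, w, rfl⟩

theorem smul_mem_rankOneSlice {l : K} {X : Matrix ι ι K} (t : K) (hX : X ∈ rankOneSlice l) :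
    t • X ∈ rankOneSlice (t * l) := by
  obtain ⟨u, w, h, rfl⟩ := mem_rankOneSlice_iff.1 hX
  refine mem_rankOneSlice_iff.2 ⟨t • u, w, ?_, ?_⟩
  · rw [dotProduct_smul, h, smul_eq_mul]; ring
  · rw [smul_add, smul_smul, smul_vecMulVec]

theorem conj_mem_rankOneSlice {l : K} {X : Matrix ι ι K} (g : GL ι K) (hX : X ∈ rankOneSlice l) :
    (g : Matrix ι ι K) * X * (↑g⁻¹ : Matrix ι ι K) ∈ rankOneSlice l := by
  obtain ⟨u, w, h, rfl⟩ := mem_rankOneSlice_iff.1 hX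
  refine mem_rankOneSlice_iff.2 ⟨_, _, ?_, conj_smul_one_add_vecMulVec g l u w⟩
  rw [← dotProduct_mulVec, mulVec_mulVec, Units.inv_mul, one_mulVec, h]

theorem setOf_exists_eq_smul_conj_eq_iUnion_rankOneSlice {l : K} (hl : l ≠ 0)
    (hι : (Fintype.card ι : K) ≠ 0) {Y : Matrix ι ι K} (hY : Y ∈ rankOneSlice l) :
    {X | ∃ t : K, t ≠ 0 ∧ ∃ g : GL ι K,
      X = t • ((g : Matrix ι ι K) * Y * (↑g⁻¹ : Matrix ι ι K))} =
      ⋃ m ≠ (0 : K), rankOneSlice m := by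
  ext X
  simp only [Set.mem_ofPred_eq, Set.mem_iUnion, exists_prop]
  constructor
  · rintro ⟨t, ht, g, rfl⟩
    exact ⟨t * l, mul_ne_zero ht hl, smul_mem_rankOneSlice t (conj_mem_rankOneSlice g hY)⟩
  · rintro ⟨m, hm, hX⟩
    have ht : m / l ≠ 0 := div_ne_zero hm hl
    obtain ⟨u, w, h, rfl⟩ := mem_rankOneSlice_iff.1 hX
    obtain ⟨u₀, w₀, h₀, rfl⟩ := mem_rankOneSlice_iff.1 hY
    obtain ⟨g, hgu, hgw⟩ := exists_mulVec_eq_and_vecMul_inv_eq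
      (u := u₀) (w := w₀) (u' := (m / l)⁻¹ • u) (w' := w)
      (by rw [dotProduct_smul, h, h₀, smul_eq_mul]; field_simp)
      (by rw [h₀]; exact neg_ne_zero.2 (mul_ne_zero hι hl))
    refine ⟨m / l, ht, g, ?_⟩
    rw [conj_smul_one_add_vecMulVec, hgu, hgw, smul_add, smul_smul, div_mul_cancel₀ _ hl,
      ← smul_vecMulVec, smul_inv_smul₀ ht]

theorem diagonal_mem_rankOneSlice (i₀ : ι) :
    diagonal (fun i ↦ if i = i₀ then (Fintype.card ι : K) - 1 else -1) ∈ rankOneSlice (-1) := by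
  refine mem_rankOneSlice_iff.2 ⟨Pi.single i₀ 1, Pi.single i₀ (Fintype.card ι), by simp, ?_⟩
  ext i j
  rcases eq_or_ne i j with rfl | hij
  · by_cases hi : i = i₀
    · subst hi
      simp [vecMulVec_apply, sub_eq_neg_add]
    · simp [vecMulVec_apply, hi]
  · by_cases hi : i = i₀
    · subst hi
      simp [vecMulVec_apply, hij, hij.symm]
    · simp [vecMulVec_apply, hij, hi]

end RankOneSlice

section Minors

variable {K ι : Type*} [Field K] [Fintype ι] [DecidableEq ι]

theorem exists_conj_submatrix_eq_one (e : Fin 4 ↪ ι) {X : Matrix ι ι K} {v w : ι → K}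
    (hli : LinearIndependent K ![v, w, X *ᵥ v, X *ᵥ w]) :
    ∃ g : GL ι K,
      ((g : Matrix ι ι K) * X * (↑g⁻¹ : Matrix ι ι K)).submatrix ![e 2, e 3] ![e 0, e 1] = 1 := by
  have hsingle : LinearIndependent K fun a ↦ Pi.single (M := fun _ ↦ K) (e a) 1 := by
    simpa [Function.comp_def] using (Pi.basisFun K ι).linearIndependent.comp _ e.injective
  obtain ⟨g, hg⟩ := exists_mulVec_eq_of_linearIndependent hli hsingle
  have conj_mulVec (x : ι → K) : ((g : Matrix ι ι K) * X * (↑g⁻¹ : Matrix ι ι K)) *ᵥ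
      ((g : Matrix ι ι K) *ᵥ x) = (g : Matrix ι ι K) *ᵥ (X *ᵥ x) := by
    simp only [mulVec_mulVec, Matrix.mul_assoc, Units.inv_mul, Matrix.mul_one]
  have col_zero : ((g : Matrix ι ι K) * X * (↑g⁻¹ : Matrix ι ι K)).col (e 0) =
      Pi.single (e 2) 1 := by
    have hv : (g : Matrix ι ι K) *ᵥ v = Pi.single (e 0) 1 := hg 0
    rw [← mulVec_single_one, ← hv, conj_mulVec]
    exact hg 2
  have col_one : ((g : Matrix ι ι K) * X * (↑g⁻¹ : Matrix ι ι K)).col (e 1) =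
      Pi.single (e 3) 1 := by
    have hw : (g : Matrix ι ι K) *ᵥ w = Pi.single (e 1) 1 := hg 1
    rw [← mulVec_single_one, ← hw, conj_mulVec]
    exact hg 3
  have hne : e 2 ≠ e 3 := e.injective.ne (by decide)
  refine ⟨g, ext fun a b ↦ ?_⟩
  fin_cases b
  · refine (congrFun col_zero _).trans ?_
    fin_cases a <;> simp [hne.symm]
  · refine (congrFun col_one _).trans ?_
    fin_cases a <;> simp [hne]

theorem exists_rank_sub_smul_one_le_one {X : Matrix ι ι K} (hι : 4 ≤ Fintype.card ι)
    (h : ∀ v w, ¬ LinearIndependent K ![v, w, X *ᵥ v, X *ᵥ w]) :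
    ∃ c : K, (X - c • 1).rank ≤ 1 := by
  have hrank : 4 ≤ Module.rank K (ι → K) := by
    rw [rank_fun']
    exact_mod_cast hι
  obtain ⟨c, hc⟩ := exists_rank_sub_smul_le_one (f := X.mulVecLin) hrank h
  have hmulVecLin : (X - c • 1).mulVecLin = X.mulVecLin - c • 1 := by
    ext; simp
  refine ⟨c, ?_⟩
  rw [← hmulVecLin, LinearMap.rank, ← Module.finrank_eq_rank] at hc
  exact_mod_cast hc

theorem setOf_forall_conj_minor_eq_zero_eq_iUnion_rankOneSlice (e : Fin 4 ↪ ι) :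
    {X : Matrix ι ι K | X.trace = 0 ∧ ∀ g : GL ι K,
      (((g : Matrix ι ι K) * X * (↑g⁻¹ : Matrix ι ι K)).submatrix
        ![e 2, e 3] ![e 0, e 1]).det = 0} =
      ⋃ m, rankOneSlice m := by
  ext X
  rw [Set.mem_iUnion]
  refine ⟨fun ⟨hX, h⟩ ↦ ?_, fun ⟨c, hc⟩ ↦ ⟨hc.1, fun g ↦ ?_⟩⟩
  · have hdep (v w : ι → K) : ¬ LinearIndependent K ![v, w, X *ᵥ v, X *ᵥ w] := by
      intro hli
      obtain ⟨g, hg⟩ := exists_conj_submatrix_eq_one e hli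
      exact zero_ne_one (α := K) (by rw [← h g, hg, det_one])
    obtain ⟨c, hc⟩ := exists_rank_sub_smul_one_le_one (Fintype.card_le_of_embedding e) hdep
    exact ⟨c, hX, hc⟩
  · obtain ⟨u, w, -, h⟩ := mem_rankOneSlice_iff.1 (conj_mem_rankOneSlice g hc)
    have hentry {a b : Fin 4} (hab : a ≠ b) :
        ((g : Matrix ι ι K) * X * (↑g⁻¹ : Matrix ι ι K)) (e a) (e b) = u (e a) * w (e b) := by
      rw [h]
      simp [vecMulVec_apply, one_apply_ne (e.injective.ne hab)]
    simp only [det_fin_two, submatrix_apply, Matrix.cons_val]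
    rw [hentry (by decide), hentry (by decide), hentry (by decide), hentry (by decide)]
    ring

end Minors

section Closure

open Topology

variable {K ι : Type*} [Field K] [TopologicalSpace K] [IsTopologicalRing K] [Fintype ι]
  [DecidableEq ι]

theorem rankOneSlice_zero_subset_closure [(𝓝[≠] (0 : K)).NeBot] [Nonempty ι] :
    (rankOneSlice 0 : Set (Matrix ι ι K)) ⊆ closure (⋃ l ≠ 0, rankOneSlice l) := by
  intro X hX
  obtain ⟨u, w, hw, huw, rfl⟩ : ∃ u w : ι → K, w ≠ 0 ∧ w ⬝ᵥ u = 0 ∧ X = vecMulVec u w := by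
    obtain ⟨u, w, h, rfl⟩ := mem_rankOneSlice_iff.1 hX
    rcases eq_or_ne w 0 with rfl | hw
    · exact ⟨0, 1, one_ne_zero, by simp, by simp⟩
    · exact ⟨u, w, hw, by simpa using h, by simp⟩
  obtain ⟨c, hc⟩ : ∃ c, w ⬝ᵥ c = Fintype.card ι := by
    obtain ⟨i, hi⟩ := Function.ne_iff.1 hw
    exact ⟨Pi.single i ((w i)⁻¹ * Fintype.card ι), by simp [mul_inv_cancel_left₀ hi]⟩
  let Y (s : K) : Matrix ι ι K := s • 1 + vecMulVec (u - s • c) w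
  have hY (s : K) : Y s ∈ rankOneSlice s :=
    mem_rankOneSlice_iff.2 ⟨_, _, by simp [dotProduct_sub, huw, hc, mul_comm], rfl⟩
  have hcont : Continuous Y := by fun_prop
  have hlim : Filter.Tendsto Y (𝓝[≠] 0) (𝓝 (vecMulVec u w)) := by
    simpa [Y] using (hcont.tendsto 0).mono_left nhdsWithin_le_nhds
  refine mem_closure_of_tendsto hlim ?_
  filter_upwards [self_mem_nhdsWithin] with s hs
  exact Set.mem_biUnion hs (hY s)

end Closure

section ZariskiClosed

variable {n : ℕ}

theorem zclosed_setOf_forall_eval_eq_zero {κ : Sort*} (p : κ → MvPolynomial (Fin n × Fin n) ℂ) :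
    zclosed {X : Mat n | ∀ a, MvPolynomial.eval (fun q ↦ X q.1 q.2) (p a) = 0} :=
  ⟨Set.range p, by simp⟩

theorem zclosed.inter {S T : Set (Mat n)} (hS : zclosed S) (hT : zclosed T) : zclosed (S ∩ T) := by
  obtain ⟨P, rfl⟩ := hS
  obtain ⟨Q, rfl⟩ := hT
  exact ⟨P ∪ Q, by ext; simp [or_imp, forall_and]⟩

theorem zclosed.isClosed {S : Set (Mat n)} (hS : zclosed S) : IsClosed S := by
  obtain ⟨T, rfl⟩ := hS
  simp only [Set.ofPred_forall]
  refine isClosed_biInter fun p _ ↦ isClosed_eq ?_ continuous_const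
  exact (MvPolynomial.continuous_eval p).comp (by fun_prop)

theorem closure_subset_zclosure (S : Set (Mat n)) : closure S ⊆ zclosure S :=
  Set.subset_sInter fun _ hT ↦ closure_minimal hT.2 hT.1.isClosed

theorem zclosed_setOf_trace_eq_zero : zclosed {X : Mat n | X.trace = 0} :=
  ⟨{(mvPolynomialX (Fin n) (Fin n) ℂ).trace}, by simp [trace]⟩

theorem zclosed_setOf_forall_conj_minor_eq_zero {m : Type*} [Fintype m] [DecidableEq m]
    (r c : m → Fin n) :
    zclosed {X : Mat n | ∀ g : GLn n,
      (((g : Mat n) * X * (↑g⁻¹ : Mat n)).submatrix r c).det = 0} := by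
  let conjMinor (g : GLn n) : MvPolynomial (Fin n × Fin n) ℂ :=
    (((g : Mat n).map MvPolynomial.C * mvPolynomialX (Fin n) (Fin n) ℂ *
      (↑g⁻¹ : Mat n).map MvPolynomial.C).submatrix r c).det
  have eval_conjMinor (g : GLn n) (X : Mat n) :
      MvPolynomial.eval (fun q ↦ X q.1 q.2) (conjMinor g) =
        (((g : Mat n) * X * (↑g⁻¹ : Mat n)).submatrix r c).det := by
    rw [RingHom.map_det, RingHom.mapMatrix_apply, ← submatrix_map, Matrix.map_mul, Matrix.map_mul,
      ← RingHom.mapMatrix_apply _ (mvPolynomialX _ _ _), mvPolynomialX_mapMatrix_eval]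
    simp [Matrix.map_map, Function.comp_def]
  simpa only [eval_conjMinor] using zclosed_setOf_forall_eval_eq_zero conjMinor

theorem zclosure_iUnion_ne_zero_rankOneSlice (hn : 4 ≤ n) :
    zclosure (⋃ m ≠ (0 : ℂ), rankOneSlice m : Set (Mat n)) = ⋃ m, rankOneSlice m := by
  have : NeZero n := ⟨by omega⟩
  have iUnion_eq : (⋃ m, rankOneSlice m : Set (Mat n)) =
      rankOneSlice 0 ∪ ⋃ m ≠ (0 : ℂ), rankOneSlice m := iSup_split_single _ 0
  refine Set.Subset.antisymm (Set.sInter_subset_of_mem ⟨?_, ?_⟩) ?_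
  · rw [← setOf_forall_conj_minor_eq_zero_eq_iUnion_rankOneSlice (Fin.castLEEmb hn)]
    exact zclosed_setOf_trace_eq_zero.inter (zclosed_setOf_forall_conj_minor_eq_zero _ _)
  · exact iUnion_eq ▸ Set.subset_union_right
  · rw [iUnion_eq]
    exact (Set.union_subset rankOneSlice_zero_subset_closure subset_closure).trans
      (closure_subset_zclosure _)

end ZariskiClosed

theorem stmt_4 (n : ℕ) (hn : 4 ≤ n)
    -- `μ(X) = X_{n,1}·X_{n−1,2} − X_{n−1,1}·X_{n,2}` (1-based indices)
    (mu : Mat n → ℂ)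
    (hmu : mu = fun X =>
      X ⟨n - 1, by omega⟩ ⟨0, by omega⟩ * X ⟨n - 2, by omega⟩ ⟨1, by omega⟩ -
      X ⟨n - 2, by omega⟩ ⟨0, by omega⟩ * X ⟨n - 1, by omega⟩ ⟨1, by omega⟩)
    -- `D = diag(n−1, −1, −1, …, −1)`
    (D : Mat n)
    (hD : D = Matrix.diagonal fun i : Fin n => if (i : ℕ) = 0 then ((n : ℂ) - 1) else -1)
    (V : Set (Mat n))
    (hV : V = {X | X.trace = 0 ∧ ∀ g : GLn n, mu ((↑g : Mat n) * X * (↑g⁻¹ : Mat n)) = 0})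
    (C : Set (Mat n))
    (hC : C = {X | ∃ t : ℂ, t ≠ 0 ∧ ∃ g : GLn n,
      X = t • ((↑g : Mat n) * D * (↑g⁻¹ : Mat n))}) :
    V = zclosure C ∧ V = C ∪ {X : Mat n | X.trace = 0 ∧ X.rank ≤ 1} := by
  have hinj : Function.Injective (![⟨0, by omega⟩, ⟨1, by omega⟩, ⟨n - 1, by omega⟩,
      ⟨n - 2, by omega⟩] : Fin 4 → Fin n) := by
    intro a b
    fin_cases a <;> fin_cases b <;> simp [Fin.ext_iff] <;> omega
  have V_eq : V = ⋃ m, rankOneSlice m := by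
    rw [hV, hmu, ← setOf_forall_conj_minor_eq_zero_eq_iUnion_rankOneSlice ⟨_, hinj⟩]
    simp only [det_fin_two, submatrix_apply, Function.Embedding.coeFn_mk, Matrix.cons_val, mul_comm]
  have D_mem : D ∈ rankOneSlice (-1) := by
    simpa [hD, Fin.ext_iff] using diagonal_mem_rankOneSlice (K := ℂ) (⟨0, by omega⟩ : Fin n)
  have C_eq : C = ⋃ m ≠ 0, rankOneSlice m := hC.trans <|
    setOf_exists_eq_smul_conj_eq_iUnion_rankOneSlice (neg_ne_zero.2 one_ne_zero)
      (by rw [Fintype.card_fin]; exact Nat.cast_ne_zero.2 (by omega)) D_mem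
  have zero_slice_eq : {X : Mat n | X.trace = 0 ∧ X.rank ≤ 1} = rankOneSlice 0 := by
    simp only [rankOneSlice, zero_smul, sub_zero]
  rw [V_eq, C_eq, zero_slice_eq, zclosure_iUnion_ne_zero_rankOneSlice hn, Set.union_comm]
  exact ⟨rfl, iSup_split_single _ 0⟩
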